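/- If J is a dominant state string for a sign string S of length n ≥ 1, then some growth rule applies to (S,J): there exists a position k < n at which one of the H-, U-, or Y-rules can be applied. -/

import Mathlib

/-!
A growth rule applies wherever the state string descends, `j_k > j_{k+1}`, whatever the two signs
are. Each step of the lattice path raises the sum of the two coordinates, its height, by exactly
the value of the state. The first state of a path that starts inside the chamber is `1`, so without
a descent all `n` states are `1`, and the path ends at height `n` rather than at the origin.
-/

noncomputable section

/-- The ground field `K = ℚ(v)`. -/
abbrev K : Type := RatFunc ℚ

/-- The indeterminate `v`. -/
def v : K := RatFunc.X

/-- The three states `-1, 0, 1`. -/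
inductive St where
  | neg : St
  | zero : St
  | pos : St
deriving DecidableEq

instance : Fintype St where
  elems := {St.neg, St.zero, St.pos}
  complete := fun x => by cases x <;> simp

/-- The integer value of a state. -/
def stval : St → ℤ
  | .neg => -1
  | .zero => 0
  | .pos => 1

/-- The order `-1 < 0 < 1` on states. -/
def stLt (a b : St) : Prop := stval a < stval b

/-- The weight `μ(s, j) ∈ ℤ²`; `true` is the sign `+`, `false` is `-`. -/
def wt : Bool → St → ℤ × ℤ
  | true, .pos => (1, 0)
  | true, .zero => (-1, 1)
  | true, .neg => (0, -1)
  | false, .pos => (0, 1)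
  | false, .zero => (1, -1)
  | false, .neg => (-1, 0)

/-- Total weight `Σ μ(s_k, j_k)` of a sign string and a state string. -/
def wtSum (S : List Bool) (J : List St) : ℤ × ℤ :=
  ((S.zip J).map fun p => wt p.1 p.2).sum

/-- A state string is dominant if its lattice path stays in the dominant
Weyl chamber and returns to the origin. -/
def Dominant (S : List Bool) (J : List St) : Prop :=
  J.length = S.length ∧
  (∀ k : ℕ, 0 ≤ (wtSum (S.take k) (J.take k)).1 ∧ 0 ≤ (wtSum (S.take k) (J.take k)).2) ∧
  wtSum S J = 0

/-- Coefficients of `b^{+-}(1) ∈ V⁺ ⊗ V⁻`. -/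
def bCpm : St → St → K
  | .pos, .neg => 1
  | .zero, .zero => v⁻¹
  | .neg, .pos => v⁻¹ ^ 2
  | _, _ => 0

/-- Coefficients of `b^{-+}(1) ∈ V⁻ ⊗ V⁺`. -/
def bCmp : St → St → K
  | .pos, .neg => 1
  | .zero, .zero => v⁻¹
  | .neg, .pos => v⁻¹ ^ 2
  | _, _ => 0

/-- Matrix entries of `σ_{+-} : V⁺ ⊗ V⁻ → K`. -/
def sCpm : St → St → K
  | .neg, .pos => 1
  | .zero, .zero => v
  | .pos, .neg => v ^ 2
  | _, _ => 0

/-- Matrix entries of `σ_{-+} : V⁻ ⊗ V⁺ → K`. -/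
def sCmp : St → St → K
  | .neg, .pos => 1
  | .zero, .zero => v
  | .pos, .neg => v ^ 2
  | _, _ => 0

/-- `tYpp a b c` is the coefficient of `e_a ⊗ e_b` in `t^{++}_-(e_c)`. -/
def tYpp : St → St → St → K
  | .pos, .zero, .pos => 1
  | .zero, .pos, .pos => v⁻¹
  | .pos, .neg, .zero => 1
  | .neg, .pos, .zero => v⁻¹
  | .zero, .neg, .neg => 1
  | .neg, .zero, .neg => v⁻¹
  | _, _, _ => 0

/-- `tYmm a b c` is the coefficient of `e_a ⊗ e_b` in `t^{--}_+(e_c)`. -/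
def tYmm : St → St → St → K
  | .pos, .zero, .pos => 1
  | .zero, .pos, .pos => v⁻¹
  | .pos, .neg, .zero => 1
  | .neg, .pos, .zero => v⁻¹
  | .zero, .neg, .neg => 1
  | .neg, .zero, .neg => v⁻¹
  | _, _, _ => 0

/-- `tLpp a b c` is the coefficient of `e_c` in `t^-_{++}(e_a ⊗ e_b)`. -/
def tLpp : St → St → St → K
  | .pos, .zero, .pos => v
  | .zero, .pos, .pos => 1
  | .pos, .neg, .zero => v
  | .neg, .pos, .zero => 1
  | .zero, .neg, .neg => v
  | .neg, .zero, .neg => 1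
  | _, _, _ => 0

/-- `tLmm a b c` is the coefficient of `e_c` in `t^+_{--}(e_a ⊗ e_b)`. -/
def tLmm : St → St → St → K
  | .pos, .zero, .pos => v
  | .zero, .pos, .pos => 1
  | .pos, .neg, .zero => v
  | .neg, .pos, .zero => 1
  | .zero, .neg, .neg => v
  | .neg, .zero, .neg => 1
  | _, _, _ => 0

/-- Matrix entries of the H-map
`(id_{V⁺} ⊗ t^-_{++}) ∘ (t^{++}_- ⊗ id_{V⁺}) : V⁻ ⊗ V⁺ → V⁺ ⊗ V⁻`:
`HCpm a b c d` is the coefficient of `e_a ⊗ e_b` in the image of `e_c ⊗ e_d`. -/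
def HCpm (a b c d : St) : K := ∑ y : St, tYpp a y c * tLpp y d b

/-- Matrix entries of the H-map
`(t^-_{++} ⊗ id_{V⁺}) ∘ (id_{V⁺} ⊗ t^{++}_-) : V⁺ ⊗ V⁻ → V⁻ ⊗ V⁺`:
`HCmp a b c d` is the coefficient of `e_a ⊗ e_b` in the image of `e_c ⊗ e_d`. -/
def HCmp (a b c d : St) : K := ∑ x : St, tLpp c x a * tYpp x b d

/-- State patterns of the three H-rules: `(j_k, j_{k+1})` on top, the
replacement below. -/
inductive HPat : St → St → St → St → Prop where
  | h1 : HPat .pos .zero .zero .pos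
  | h2 : HPat .zero .zero .neg .pos
  | h3 : HPat .zero .neg .neg .zero

/-- State patterns of the three Y-rules. -/
inductive YPat : St → St → St → Prop where
  | y1 : YPat .pos .zero .pos
  | y2 : YPat .pos .neg .zero
  | y3 : YPat .zero .neg .neg

/-- One application of a growth rule, rewriting `(S, J)` to `(S', J')`. -/
inductive Step : List Bool → List St → List Bool → List St → Prop where
  | hstep (A B : List Bool) (P Q : List St) (s1 s2 : Bool) (j1 j2 j1' j2' : St)
      (hl : A.length = P.length) (hs : s1 ≠ s2) (hp : HPat j1 j2 j1' j2') :
      Step (A ++ s1 :: s2 :: B) (P ++ j1 :: j2 :: Q)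
        (A ++ (!s1) :: (!s2) :: B) (P ++ j1' :: j2' :: Q)
  | ustep (A B : List Bool) (P Q : List St) (s1 s2 : Bool)
      (hl : A.length = P.length) (hs : s1 ≠ s2) :
      Step (A ++ s1 :: s2 :: B) (P ++ St.pos :: St.neg :: Q) (A ++ B) (P ++ Q)
  | ystep (A B : List Bool) (P Q : List St) (s : Bool) (j1 j2 j' : St)
      (hl : A.length = P.length) (hp : YPat j1 j2 j') :
      Step (A ++ s :: s :: B) (P ++ j1 :: j2 :: Q) (A ++ (!s) :: B) (P ++ j' :: Q)

/-- A complete execution of the growth algorithm from `(S, J)` down to the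
pair of empty strings. -/
inductive Exec : List Bool → List St → Type where
  | nil : Exec [] []
  | hstep (A B : List Bool) (P Q : List St) (s1 s2 : Bool) (j1 j2 j1' j2' : St)
      (hl : A.length = P.length) (hs : s1 ≠ s2) (hp : HPat j1 j2 j1' j2')
      (e : Exec (A ++ (!s1) :: (!s2) :: B) (P ++ j1' :: j2' :: Q)) :
      Exec (A ++ s1 :: s2 :: B) (P ++ j1 :: j2 :: Q)
  | ustep (A B : List Bool) (P Q : List St) (s1 s2 : Bool)
      (hl : A.length = P.length) (hs : s1 ≠ s2)
      (e : Exec (A ++ B) (P ++ Q)) :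
      Exec (A ++ s1 :: s2 :: B) (P ++ St.pos :: St.neg :: Q)
  | ystep (A B : List Bool) (P Q : List St) (s : Bool) (j1 j2 j' : St)
      (hl : A.length = P.length) (hp : YPat j1 j2 j')
      (e : Exec (A ++ (!s) :: B) (P ++ j' :: Q)) :
      Exec (A ++ s :: s :: B) (P ++ j1 :: j2 :: Q)

/-- The web tensor of an execution, as coordinates with respect to the basis
`e^S_J` of `V^S`: `web e L` is the coefficient of `e^S_L`. -/
def web : {S : List Bool} → {J : List St} → Exec S J → List St → K
  | _, _, .nil, L => if L = [] then 1 else 0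
  | _, _, .hstep A _ _ _ s1 _ _ _ _ _ _ _ _ e, L =>
      match L.drop A.length with
      | a :: b :: R =>
          ∑ c : St, ∑ d : St,
            (if s1 then HCpm a b c d else HCmp a b c d) *
              web e (L.take A.length ++ c :: d :: R)
      | _ => 0
  | _, _, .ustep A _ _ _ s1 _ _ _ e, L =>
      match L.drop A.length with
      | a :: b :: R => (if s1 then bCpm a b else bCmp a b) * web e (L.take A.length ++ R)
      | _ => 0
  | _, _, .ystep A _ _ _ s _ _ _ _ _ e, L =>
      match L.drop A.length with
      | a :: b :: R =>
          ∑ c : St, (if s then tYpp a b c else tYmm a b c) * web e (L.take A.length ++ c :: R)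
      | _ => 0

/-- `c ∈ v⁻¹ ℤ[v⁻¹]`: a polynomial in `v⁻¹` with zero constant term. -/
def ZeroConst (c : K) : Prop :=
  ∃ p : Polynomial ℤ, p.coeff 0 = 0 ∧ c = Polynomial.aeval v⁻¹ p

/-- `x` has the negative-exponent property relative to a state string `J`
(`n` is the length of the ambient sign string). -/
def NegExpProp (n : ℕ) (x : List St → K) (J : List St) : Prop :=
  x J = 1 ∧ ∀ J' : List St, J'.length = n → J' ≠ J → ZeroConst (x J')

/-- `c ∈ ℕ[v, v⁻¹]`: a Laurent polynomial with nonnegative integer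
coefficients. -/
def IsNatLaurent (c : K) : Prop :=
  ∃ (p : Polynomial ℕ) (m : ℕ), c = v⁻¹ ^ m * Polynomial.aeval v p

/-- `c ∈ ℤ[v⁻¹]`. -/
def InZInv (c : K) : Prop := ∃ p : Polynomial ℤ, c = Polynomial.aeval v⁻¹ p

/-- Property P: all coefficients lie in `ℤ[v⁻¹]` and at most one of them has a
nonzero constant term. -/
def PropP (n : ℕ) (x : List St → K) : Prop :=
  (∀ J : List St, J.length = n → InZInv (x J)) ∧
  ∀ J1 J2 : List St, J1.length = n → J2.length = n →
    ¬ ZeroConst (x J1) → ¬ ZeroConst (x J2) → J1 = J2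

/-- The sign string `(+,+,−,−,+,+,−,−,+,+,−,−)`. -/
def base : List Bool :=
  [true, true, false, false, true, true, false, false, true, true, false, false]

theorem stLt_iff {a b : St} :
    stLt a b ↔ (a = .zero ∧ b = .pos) ∨ (a = .neg ∧ b = .pos) ∨ (a = .neg ∧ b = .zero) := by
  cases a <;> cases b <;> simp [stLt, stval]

theorem exists_step_append_cons_cons_of_stLt {A B : List Bool} {P Q : List St} {s t : Bool}
    {a b : St} (hlen : A.length = P.length) (hba : stLt b a) :
    ∃ S' J', Step (A ++ s :: t :: B) (P ++ a :: b :: Q) S' J' := by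
  obtain rfl | hst := eq_or_ne s t
  · obtain ⟨rfl, rfl⟩ | ⟨rfl, rfl⟩ | ⟨rfl, rfl⟩ := stLt_iff.mp hba
    · exact ⟨_, _, .ystep A B P Q s _ _ _ hlen .y1⟩
    · exact ⟨_, _, .ystep A B P Q s _ _ _ hlen .y2⟩
    · exact ⟨_, _, .ystep A B P Q s _ _ _ hlen .y3⟩
  · obtain ⟨rfl, rfl⟩ | ⟨rfl, rfl⟩ | ⟨rfl, rfl⟩ := stLt_iff.mp hba
    · exact ⟨_, _, .hstep A B P Q s t _ _ _ _ hlen hst .h1⟩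
    · exact ⟨_, _, .ustep A B P Q s t hlen hst⟩
    · exact ⟨_, _, .hstep A B P Q s t _ _ _ _ hlen hst .h3⟩

theorem exists_step_of_not_sortedLE {S : List Bool} {J : List St} (hlen : J.length = S.length)
    (h : ¬ (J.map stval).SortedLE) : ∃ S' J', Step S J S' J' := by
  rw [List.sortedLE_iff_isChain, List.isChain_map,
    List.isChain_iff_forall_rel_of_append_cons_cons] at h
  push Not at h
  obtain ⟨a, b, P, Q, rfl, hba⟩ := h
  obtain ⟨A, s, t, B, rfl, hA⟩ :
      ∃ A s t B, S = A ++ s :: t :: B ∧ A.length = P.length := by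
    have hP : P.length + 1 < S.length := by
      simp only [List.length_append, List.length_cons] at hlen
      lia
    exact ⟨S.take P.length, S[P.length], S[P.length + 1], S.drop (P.length + 2),
      by simp, List.length_take_of_le (by lia)⟩
  exact exists_step_append_cons_cons_of_stLt hA hba

theorem wt_fst_add_snd (s : Bool) (j : St) : (wt s j).1 + (wt s j).2 = stval j := by
  cases s <;> cases j <;> rfl

theorem wtSum_cons (s : Bool) (j : St) (S : List Bool) (J : List St) :
    wtSum (s :: S) (j :: J) = wt s j + wtSum S J := by
  simp only [wtSum, List.zip_cons_cons, List.map_cons, List.sum_cons]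

theorem wtSum_fst_add_snd {S : List Bool} {J : List St} (hlen : J.length ≤ S.length) :
    (wtSum S J).1 + (wtSum S J).2 = (J.map stval).sum := by
  induction J generalizing S with
  | nil => simp [wtSum]
  | cons j J ih =>
    obtain _ | ⟨s, S⟩ := S
    · simp at hlen
    · rw [wtSum_cons, Prod.fst_add, Prod.snd_add, add_add_add_comm, wt_fst_add_snd,
        ih (by simpa using hlen), List.map_cons, List.sum_cons]

theorem eq_pos_of_wt_nonneg {s : Bool} {j : St} (h : 0 ≤ wt s j) : j = .pos := by
  cases s <;> cases j <;> simp [wt, Prod.le_def] at h ⊢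

theorem length_nsmul_head_le_sum_of_sortedLE {M : Type*} [AddMonoid M] [Preorder M]
    [AddLeftMono M] [AddRightMono M] {a : M} {l : List M} (h : (a :: l).SortedLE) :
    (a :: l).length • a ≤ (a :: l).sum := by
  refine List.card_nsmul_le_sum _ a ?_
  simpa using (List.pairwise_cons.mp h.pairwise).1

theorem step_exists_of_dominant_general (S : List Bool) (J : List St)
    (hlen : J.length = S.length) (hfirst : 0 ≤ wtSum (S.take 1) (J.take 1))
    (hlast : (wtSum S J).1 + (wtSum S J).2 < S.length) :
    ∃ (S' : List Bool) (J' : List St), Step S J S' J' := by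
  refine exists_step_of_not_sortedLE hlen fun hsorted ↦ hlast.not_ge ?_
  rw [wtSum_fst_add_snd hlen.le]
  match S, J with
  | [], [] => simp
  | s :: S, j :: J =>
    obtain rfl : j = .pos := eq_pos_of_wt_nonneg (s := s) (by simpa [wtSum] using hfirst)
    simpa [← hlen, stval] using length_nsmul_head_le_sum_of_sortedLE hsorted

/-- some growth rule applies to any nonempty dominant pair. -/
theorem step_exists_of_dominant (S : List Bool) (J : List St)
    (hJ : Dominant S J) (hn : 1 ≤ S.length) :
    ∃ (S' : List Bool) (J' : List St), Step S J S' J' := by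
  obtain ⟨hlen, hchamber, hclosed⟩ := hJ
  exact step_exists_of_dominant_general S J hlen (hchamber 1)
    (by simpa [hclosed] using Nat.succ_le_iff.mp hn)

end
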